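/- arXiv:math/0701149 — 2 statements merged into one kernel-verified Lean document; each statement's English description precedes it below -/
import Mathlib

section
/- Let n be a positive integer with 2-adic valuation d and odd part k_s (so n = 2^d · k_s with k_s odd). Then every decomposition of n has odd length if and only if k_s < 2^(d+1) (equivalently, k_s^2 < 2n). -/
/-- `IsDecomp n a m` means the `m` consecutive positive integers
`a+1, a+2, …, a+m` form a decomposition of `n`. -/
def IsDecomp (n a m : ℕ) : Prop :=
  1 ≤ m ∧ (Finset.range m).sum (fun i => a + i + 1) = n

theorem decomp_sum_aux (a m : ℕ) :
    2 * (Finset.range m).sum (fun i => a + i + 1) = m * (2 * a + m + 1) := by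
  induction m with
  | zero => simp
  | succ k ih => rw [Finset.sum_range_succ, mul_add, ih]; ring

/-- Let `n` be a positive integer with 2-adic valuation `d` and odd part `ks`
(so `n = 2^d * ks` with `ks` odd). Then every decomposition of `n` has odd
length if and only if `ks < 2^(d+1)` (equivalently, `ks² < 2n`). -/
theorem all_decompositions_odd_iff (n d ks : ℕ) (hn : 0 < n)
    (hks : Odd ks) (hfact : n = 2 ^ d * ks) :
    ((∀ a m : ℕ, IsDecomp n a m → Odd m) ↔ ks < 2 ^ (d + 1)) ∧
      (ks < 2 ^ (d + 1) ↔ ks ^ 2 < 2 * n) := by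
  have hkpos : 0 < ks := hks.pos
  refine ⟨⟨?_, ?_⟩, ?_⟩
  · intro h
    by_contra hlt
    push Not at hlt
    have hE : Even (2 ^ (d + 1)) := ⟨2 ^ d, by ring⟩
    obtain ⟨q, hq⟩ := hks
    have hp : 2 ^ (d + 1) = 2 * 2 ^ d := by ring
    have h1 : 1 ≤ 2 ^ d := Nat.one_le_two_pow
    have hodd := h (q - 2 ^ d) (2 ^ (d + 1)) ⟨Nat.one_le_two_pow, by
      have h2 := decomp_sum_aux (q - 2 ^ d) (2 ^ (d + 1))
      have h3 : 2 * (q - 2 ^ d) + 2 ^ (d + 1) + 1 = ks := by omega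
      rw [h3, hp, mul_assoc, ← hfact] at h2
      rw [hp]
      omega⟩
    exact (Nat.not_odd_iff_even.mpr hE) hodd
  · rintro hlt a m ⟨hm, hs⟩
    by_contra hodd
    have hE : Even m := Nat.not_odd_iff_even.mp hodd
    have h2 := decomp_sum_aux a m
    have ho : Odd (2 * a + m + 1) := by
      obtain ⟨r, hr⟩ := hE
      exact ⟨a + r, by omega⟩
    have h4 : 2 ^ (d + 1) * ks = m * (2 * a + m + 1) := by
      rw [← h2, hs, hfact]; ring
    have hc : Nat.Coprime (2 ^ (d + 1)) (2 * a + m + 1) :=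
      Nat.Coprime.pow_left _ (Nat.coprime_two_left.mpr ho)
    have d1 : 2 ^ (d + 1) ∣ m := hc.dvd_of_dvd_mul_right ⟨ks, h4.symm⟩
    have d2 : 2 * a + m + 1 ∣ ks :=
      hc.symm.dvd_of_dvd_mul_left ⟨m, by rw [h4]; ring⟩
    have := Nat.le_of_dvd hm d1
    have := Nat.le_of_dvd hkpos d2
    omega
  · have h5 : 2 * n = 2 ^ (d + 1) * ks := by rw [hfact]; ring
    rw [h5, sq]
    exact (Nat.mul_lt_mul_right hkpos).symm
end

section
/- Let n be a positive integer with odd part k_s. If k is an odd divisor of n with k^2 > 2n, then k_s/k is an odd divisor of n whose square is less than 2n. Consequently, the number of even decompositions of n is at most the number of odd decompositions of n. -/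
theorem isDecomp_iff_aux (n a m : ℕ) : IsDecomp n a m ↔ 1 ≤ m ∧ m * (2 * a + m + 1) = 2 * n := by
  have h : ∀ m : ℕ, 2 * (Finset.range m).sum (fun i => a + i + 1) = m * (2 * a + m + 1) := by
    intro m
    induction m with
    | zero => simp
    | succ k ih => rw [Finset.sum_range_succ, mul_add, ih]; ring
  unfold IsDecomp
  rw [← h m]
  constructor
  · rintro ⟨h1, h2⟩
    exact ⟨h1, by rw [h2]⟩
  · rintro ⟨h1, h2⟩
    exact ⟨h1, by omega⟩

theorem odd_dvd_aux (n d ks k : ℕ) (hfact : n = 2 ^ d * ks) (hk : k ∣ n) (ho : Odd k) : k ∣ ks := by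
  rw [hfact] at hk
  exact (Nat.Coprime.pow_right d ho.coprime_two_right).dvd_of_dvd_mul_left hk

theorem even_aux (n d ks a m : ℕ) (hn : 0 < n)
    (hks : Odd ks) (hfact : n = 2 ^ d * ks) (h : IsDecomp n a m) (he : Even m) :
    ∃ c, Odd c ∧ m = 2 ^ (d + 1) * c ∧ c * (2 * a + m + 1) = ks := by
  rw [isDecomp_iff_aux] at h
  obtain ⟨h1, h2⟩ := h
  have ho : Odd (2 * a + m + 1) := by
    obtain ⟨r, rfl⟩ := he
    exact ⟨a + r, by ring⟩
  have hd : (2 * a + m + 1) ∣ n := by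
    obtain ⟨r, rfl⟩ := he
    exact ⟨r, by nlinarith⟩
  obtain ⟨c, hc⟩ := odd_dvd_aux n d ks _ hfact hd ho
  refine ⟨c, ?_, ?_, ?_⟩
  · rw [hc] at hks
    exact (Nat.odd_mul.1 hks).2
  · have : 0 < 2 * a + m + 1 := by omega
    apply Nat.eq_of_mul_eq_mul_right this
    rw [h2, hfact, hc]; ring
  · rw [hc]; ring

/-- Let `n` be a positive integer with odd part `ks`. If `k` is an odd divisor
of `n` with `k² > 2n`, then `ks/k` is an odd divisor of `n` whose square is
less than `2n`. Consequently the number of even decompositions of `n` is at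
most the number of odd decompositions of `n`. -/
theorem even_decompositions_le_odd (n d ks : ℕ) (hn : 0 < n)
    (hks : Odd ks) (hfact : n = 2 ^ d * ks) :
    (∀ k : ℕ, k ∣ n → Odd k → 2 * n < k ^ 2 →
        (ks / k ∣ n ∧ Odd (ks / k) ∧ (ks / k) ^ 2 < 2 * n)) ∧
      {p : ℕ × ℕ | IsDecomp n p.1 p.2 ∧ Even p.2}.ncard ≤
        {p : ℕ × ℕ | IsDecomp n p.1 p.2 ∧ Odd p.2}.ncard := by
  constructor
  · intro k hk ho hlt
    obtain ⟨c, hc⟩ := odd_dvd_aux n d ks k hfact hk ho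
    have hkp : 0 < k := ho.pos
    have hq : ks / k = c := by rw [hc]; exact Nat.mul_div_cancel_left c hkp
    rw [hq]
    have hco : Odd c := by
      rw [hc] at hks
      exact (Nat.odd_mul.1 hks).2
    refine ⟨⟨2 ^ d * k, by rw [hfact, hc]; ring⟩, hco, ?_⟩
    have hcp := hco.pos
    have hp : 1 ≤ 2 ^ d := Nat.one_le_two_pow
    have hge : k * c ≤ n := by rw [hfact, hc]; nlinarith [Nat.zero_le (k * c)]
    have hck : c < k := by
      by_contra! hh
      nlinarith
    nlinarith
  · have hfin : {p : ℕ × ℕ | IsDecomp n p.1 p.2 ∧ Odd p.2}.Finite := by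
      apply ((Set.finite_Iic (2 * n)).prod (Set.finite_Iic (2 * n))).subset
      rintro ⟨a, m⟩ ⟨h, -⟩
      rw [isDecomp_iff_aux] at h
      obtain ⟨h1, h2⟩ := h
      simp only at h1 h2
      constructor
      · show a ≤ 2 * n
        nlinarith
      · show m ≤ 2 * n
        nlinarith

    refine Set.ncard_le_ncard_of_injOn
      (fun p : ℕ × ℕ => ((2 ^ (d + 1) * (2 * p.1 + p.2 + 1) - p.2 / 2 ^ (d + 1) - 1) / 2, p.2 / 2 ^ (d + 1))) ?_ ?_ hfin
    · rintro ⟨a, m⟩ ⟨h, he⟩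
      obtain ⟨c, hco, hm, hc⟩ := even_aux n d ks a m hn hks hfact h he
      have hpp : 0 < 2 ^ (d + 1) := by positivity
      have hq : m / 2 ^ (d + 1) = c := by rw [hm]; exact Nat.mul_div_cancel_left c hpp
      simp only [Set.mem_ofPred_eq, hq]
      refine ⟨?_, hco⟩
      rw [isDecomp_iff_aux]
      refine ⟨hco.pos, ?_⟩
      have hp : 1 ≤ 2 ^ d := Nat.one_le_two_pow
      have h3 : 2 ^ (d + 1) * (2 * a + m + 1) = 2 * (2 ^ d * (2 * a + m + 1)) := by ring
      have hcm : c ≤ m := by rw [hm]; nlinarith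
      have h4 : 2 * a + m + 1 ≤ 2 ^ d * (2 * a + m + 1) := Nat.le_mul_of_pos_left _ hp
      have h5 : 2 * ((2 ^ (d + 1) * (2 * a + m + 1) - c - 1) / 2) + c + 1
          = 2 * (2 ^ d * (2 * a + m + 1)) := by
        rw [h3]
        generalize 2 ^ d * (2 * a + m + 1) = X at *
        obtain ⟨r, rfl⟩ := hco
        omega
      rw [h5, hfact, ← hc]; ring
    · rintro ⟨a, m⟩ ⟨h, he⟩ ⟨a', m'⟩ ⟨h', he'⟩ heq
      obtain ⟨c, hco, hm, hc⟩ := even_aux n d ks a m hn hks hfact h he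
      obtain ⟨c', hco', hm', hc'⟩ := even_aux n d ks a' m' hn hks hfact h' he'
      have hpp : 0 < 2 ^ (d + 1) := by positivity
      have hq : m / 2 ^ (d + 1) = c := by rw [hm]; exact Nat.mul_div_cancel_left c hpp
      have hq' : m' / 2 ^ (d + 1) = c' := by rw [hm']; exact Nat.mul_div_cancel_left c' hpp
      have hcc : c = c' := by
        have := congrArg Prod.snd heq
        simp only [hq, hq'] at this
        exact this
      subst hcc
      have hmm : m = m' := by rw [hm, hm']
      have := Nat.eq_of_mul_eq_mul_left hco.pos (hc.trans hc'.symm)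
      ext
      · show a = a'
        omega
      · exact hmm
end
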